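/- For every natural number k ≥ 1 and every real number x ≥ k + 2, the double inequality R_k(x) < K(x)/Γ(x + 1) ≤ ((P_{k−1}(x) + 1)/P_{k−1}(x)) · R_k(x) holds, where the right-hand inequality is an equality when x = k + 2. Here R_k(x) = Σ_{j=0}^{k−1} Π_{i=0}^{j} 1/(x − i) and P_{k−1}(x) = 1 + Σ_{j=0}^{k−2} Π_{i=0}^{j} (x − (k−1) + i). -/

import Mathlib

open MeasureTheory Set

/-- Kurepa's function for real `x`:
`K(x) = ∫₀^∞ e^{-t} (t^x - 1)/(t - 1) dt`. -/
noncomputable def kurepa (x : ℝ) : ℝ :=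
  ∫ t in Ioi (0 : ℝ), Real.exp (-t) * ((t ^ x - 1) / (t - 1))

/-- The rational function `R k x = ∑_{j=0}^{k-1} ∏_{i=0}^{j} 1/(x-i)`. -/
noncomputable def kurepaR (k : ℕ) (x : ℝ) : ℝ :=
  ∑ j ∈ Finset.range k, ∏ i ∈ Finset.range (j + 1), (1 / (x - (i : ℝ)))

/-- The polynomial `P k x = 1 + ∑_{j=0}^{k-1} ∏_{i=0}^{j} (x - k + i)`. -/
noncomputable def kurepaP (k : ℕ) (x : ℝ) : ℝ :=
  1 + ∑ j ∈ Finset.range k, ∏ i ∈ Finset.range (j + 1), (x - (k : ℝ) + (i : ℝ))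

/-! Since `(t ^ (y + 1) - 1) / (t - 1) = t ^ y + (t ^ y - 1) / (t - 1)`, Kurepa's function
satisfies `K(y + 1) = Γ(y + 1) + K(y)`, and `k` such steps give
`K(x) / Γ(x + 1) = R_k(x) + K(x - k) / Γ(x + 1)`. The same sum of Gamma values computes
`P_{k-1}(x)`, and turns the upper bound into `R_k(x) + Γ(x - k + 1) / Γ(x + 1)`. It remains to see
that `0 < K(y) ≤ Γ(y + 1)` for `y = x - k ≥ 2`, with equality on the right at `y = 2`.

One step of the recursion turns `K(y + 1) ≤ Γ(y + 2)` into `K(y) ≤ y Γ(y + 1)` for `y ≥ 1`, and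
further steps reduce this to `1 ≤ y ≤ 2`. There `t ↦ (t ^ y - 1) / (t - 1)` lies below its tangent
at `t = 1`, where its value is `y`; as `1` is the mean of the exponential distribution, integrating
the tangent gives `K(y) ≤ y ≤ y Γ(y + 1)`. -/

/-- The integrand of Kurepa's function `kurepa y`. Division by zero makes it `0`, rather than its
limit `y * exp (-1)`, at the single point `t = 1`. -/
noncomputable def kurepaIntegrand (y t : ℝ) : ℝ :=
  Real.exp (-t) * ((t ^ y - 1) / (t - 1))

lemma kurepaIntegrand_zero (t : ℝ) : kurepaIntegrand 0 t = 0 := by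
  simp [kurepaIntegrand]

lemma kurepaIntegrand_add_one (y : ℝ) {t : ℝ} (ht0 : t ≠ 0) (ht1 : t ≠ 1) :
    kurepaIntegrand (y + 1) t = Real.exp (-t) * t ^ y + kurepaIntegrand y t := by
  have : t - 1 ≠ 0 := sub_ne_zero.mpr ht1
  rw [kurepaIntegrand, kurepaIntegrand, Real.rpow_add_one ht0]
  field_simp
  ring

lemma kurepaIntegrand_strictMono {t : ℝ} (ht0 : 0 < t) (ht1 : t ≠ 1) :
    StrictMono (kurepaIntegrand · t) := by
  intro y z hyz
  refine mul_lt_mul_of_pos_left ?_ (Real.exp_pos _)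
  rcases ht1.lt_or_gt with ht | ht
  · exact div_lt_div_of_neg_of_lt (sub_neg.mpr ht)
      (sub_lt_sub_right (Real.rpow_lt_rpow_of_exponent_gt ht0 ht hyz) 1)
  · exact div_lt_div_of_pos_right
      (sub_lt_sub_right (Real.rpow_lt_rpow_of_exponent_lt ht hyz) 1) (sub_pos.mpr ht)

lemma kurepaIntegrand_mono {t : ℝ} (ht0 : 0 < t) : Monotone (kurepaIntegrand · t) := by
  rcases eq_or_ne t 1 with rfl | ht1
  · simp [kurepaIntegrand, monotone_const]
  · exact (kurepaIntegrand_strictMono ht0 ht1).monotone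

lemma kurepaIntegrand_nonneg {y t : ℝ} (hy : 0 ≤ y) (ht0 : 0 < t) : 0 ≤ kurepaIntegrand y t :=
  kurepaIntegrand_zero t ▸ kurepaIntegrand_mono ht0 hy

lemma kurepaIntegrand_add_one_ae_eq (y : ℝ) :
    kurepaIntegrand (y + 1) =ᵐ[volume.restrict (Ioi 0)]
      fun t ↦ Real.exp (-t) * t ^ y + kurepaIntegrand y t := by
  have h_ne : ∀ᵐ t ∂volume.restrict (Ioi (0 : ℝ)), t ≠ 1 := ae_restrict_of_ae (by simp [ae_iff])
  filter_upwards [h_ne, ae_restrict_mem measurableSet_Ioi] with t ht1 ht0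
  exact kurepaIntegrand_add_one y (ne_of_gt ht0) ht1

lemma integrableOn_exp_neg_mul_rpow {y : ℝ} (hy : -1 < y) :
    IntegrableOn (fun t ↦ Real.exp (-t) * t ^ y) (Ioi 0) := by
  simpa using Real.GammaIntegral_convergent (neg_lt_iff_pos_add.mp hy)

lemma integral_exp_neg_mul_rpow_eq_Gamma {y : ℝ} (hy : -1 < y) :
    ∫ t in Ioi 0, Real.exp (-t) * t ^ y = Real.Gamma (y + 1) := by
  rw [Real.Gamma_eq_integral (neg_lt_iff_pos_add.mp hy), add_sub_cancel_right]

lemma integrableOn_kurepaIntegrand_natCast (n : ℕ) :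
    IntegrableOn (kurepaIntegrand n) (Ioi 0) := by
  induction n with
  | zero => simp [funext kurepaIntegrand_zero]
  | succ n ih =>
    push_cast
    have hn : (-1 : ℝ) < n := neg_one_lt_zero.trans_le n.cast_nonneg
    exact ((integrableOn_exp_neg_mul_rpow hn).add ih).congr (kurepaIntegrand_add_one_ae_eq n).symm

lemma integrableOn_kurepaIntegrand {y : ℝ} (hy : 0 ≤ y) :
    IntegrableOn (kurepaIntegrand y) (Ioi 0) := by
  have h_meas : Measurable (kurepaIntegrand y) := by unfold kurepaIntegrand; fun_prop
  refine (integrableOn_kurepaIntegrand_natCast ⌈y⌉₊).mono' h_meas.aestronglyMeasurable ?_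
  filter_upwards [ae_restrict_mem measurableSet_Ioi] with t ht0
  rw [Real.norm_of_nonneg (kurepaIntegrand_nonneg hy ht0)]
  exact kurepaIntegrand_mono ht0 (Nat.le_ceil y)

lemma kurepa_zero : kurepa 0 = 0 := by
  simp [kurepa]

lemma kurepa_add_one {y : ℝ} (hy : 0 ≤ y) : kurepa (y + 1) = Real.Gamma (y + 1) + kurepa y := by
  calc kurepa (y + 1)
      = ∫ t in Ioi 0, (Real.exp (-t) * t ^ y + kurepaIntegrand y t) :=
        integral_congr_ae (kurepaIntegrand_add_one_ae_eq y)
    _ = (∫ t in Ioi 0, Real.exp (-t) * t ^ y) + kurepa y :=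
        integral_add (integrableOn_exp_neg_mul_rpow (by linarith)) (integrableOn_kurepaIntegrand hy)
    _ = Real.Gamma (y + 1) + kurepa y := by
        rw [integral_exp_neg_mul_rpow_eq_Gamma (by linarith)]

lemma kurepa_pos {y : ℝ} (hy : 0 < y) : 0 < kurepa y := by
  have h_nonneg : 0 ≤ᵐ[volume.restrict (Ioi 0)] kurepaIntegrand y := by
    filter_upwards [ae_restrict_mem measurableSet_Ioi] with t ht0
    exact kurepaIntegrand_nonneg hy.le ht0
  refine (setIntegral_pos_iff_support_of_nonneg_ae h_nonneg
    (integrableOn_kurepaIntegrand hy.le)).mpr ?_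
  have h_support : Ioi 1 ⊆ Function.support (kurepaIntegrand y) ∩ Ioi 0 := by
    intro t (ht : 1 < t)
    have ht0 : 0 < t := zero_lt_one.trans ht
    have h_lt := kurepaIntegrand_strictMono ht0 ht.ne' hy
    exact ⟨((kurepaIntegrand_zero t).symm.trans_lt h_lt).ne', ht0⟩
  exact (by simp : 0 < volume (Ioi (1 : ℝ))).trans_le (measure_mono h_support)

lemma kurepa_eq_sum_Gamma_add {k : ℕ} {x : ℝ} (hx : k ≤ x) :
    kurepa x = ∑ j ∈ Finset.range k, Real.Gamma (x - j) + kurepa (x - k) := by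
  induction k with
  | zero => simp
  | succ k ih =>
    push_cast at hx ⊢
    have h_step := kurepa_add_one (y := x - (k + 1)) (by linarith)
    rw [show x - (k + 1) + 1 = x - k by ring] at h_step
    rw [ih (by linarith), Finset.sum_range_succ, h_step, add_assoc]

lemma kurepa_two : kurepa 2 = 2 := by
  rw [kurepa_eq_sum_Gamma_add (k := 2) (by norm_num)]
  norm_num [Finset.sum_range_succ, kurepa_zero]

lemma antitoneOn_rpow_sub_taylor {s : ℝ} (hs1 : 1 ≤ s) (hs2 : s ≤ 2) :
    AntitoneOn (fun t : ℝ ↦ t ^ s - 1 - s * (t - 1) - s * (s - 1) / 2 * (t - 1) ^ 2) (Ioi 0) := by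
  have h_deriv (t : ℝ) (ht : t ∈ Ioi 0) :
      HasDerivAt (fun t : ℝ ↦ t ^ s - 1 - s * (t - 1) - s * (s - 1) / 2 * (t - 1) ^ 2)
        (s * (t ^ (s - 1) - (1 + (s - 1) * (t - 1)))) t := by
    have h_lin := (hasDerivAt_id t).sub_const 1
    refine ((((Real.hasDerivAt_rpow_const (Or.inl (ne_of_gt ht))).sub_const 1).sub
      (h_lin.const_mul s)).sub ((h_lin.pow 2).const_mul (s * (s - 1) / 2))).congr_deriv ?_
    simp only [id]
    ring
  refine antitoneOn_of_hasDerivWithinAt_nonpos (convex_Ioi 0)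
    (fun t ht ↦ (h_deriv t ht).continuousAt.continuousWithinAt)
    (fun t ht ↦ (h_deriv t (interior_subset ht)).hasDerivWithinAt) fun t ht ↦ ?_
  have ht0 : 0 < t := interior_subset ht
  have h_bernoulli : t ^ (s - 1) ≤ 1 + (s - 1) * (t - 1) := by
    simpa using rpow_one_add_le_one_add_mul_self (s := t - 1) (p := s - 1)
      (by linarith) (by linarith) (by linarith)
  exact mul_nonpos_of_nonneg_of_nonpos (by linarith) (sub_nonpos.mpr h_bernoulli)

lemma rpow_sub_one_div_sub_one_le {s t : ℝ} (hs1 : 1 ≤ s) (hs2 : s ≤ 2) (ht0 : 0 < t) :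
    (t ^ s - 1) / (t - 1) ≤ s + s * (s - 1) / 2 * (t - 1) := by
  have h_anti := antitoneOn_rpow_sub_taylor hs1 hs2
  rcases lt_trichotomy t 1 with ht | rfl | ht
  · have h_nonneg : 0 ≤ t ^ s - 1 - s * (t - 1) - s * (s - 1) / 2 * (t - 1) ^ 2 := by
      simpa using h_anti ht0 (mem_Ioi.mpr one_pos) ht.le
    rw [div_le_iff_of_neg (by linarith)]
    linarith
  · simpa using zero_le_one.trans hs1
  · have h_nonpos : t ^ s - 1 - s * (t - 1) - s * (s - 1) / 2 * (t - 1) ^ 2 ≤ 0 := by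
      simpa using h_anti (mem_Ioi.mpr one_pos) ht0 ht.le
    rw [div_le_iff₀ (by linarith)]
    linarith

lemma exp_neg_mul_affine_eq (a b t : ℝ) :
    Real.exp (-t) * (a + b * (t - 1))
      = (a - b) * (Real.exp (-t) * t ^ (0 : ℝ)) + b * (Real.exp (-t) * t ^ (1 : ℝ)) := by
  rw [Real.rpow_zero, Real.rpow_one]
  ring

lemma integrableOn_exp_neg_mul_affine (a b : ℝ) :
    IntegrableOn (fun t ↦ Real.exp (-t) * (a + b * (t - 1))) (Ioi 0) := by
  simp_rw [exp_neg_mul_affine_eq]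
  exact ((integrableOn_exp_neg_mul_rpow (by norm_num)).const_mul _).add
    ((integrableOn_exp_neg_mul_rpow (by norm_num)).const_mul _)

lemma integral_exp_neg_mul_affine (a b : ℝ) :
    ∫ t in Ioi 0, Real.exp (-t) * (a + b * (t - 1)) = a := by
  simp_rw [exp_neg_mul_affine_eq]
  rw [integral_add ((integrableOn_exp_neg_mul_rpow (by norm_num)).const_mul _)
      ((integrableOn_exp_neg_mul_rpow (by norm_num)).const_mul _),
    integral_const_mul, integral_const_mul,
    integral_exp_neg_mul_rpow_eq_Gamma (by norm_num),
    integral_exp_neg_mul_rpow_eq_Gamma (by norm_num)]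
  norm_num

lemma kurepa_le_self {s : ℝ} (hs1 : 1 ≤ s) (hs2 : s ≤ 2) : kurepa s ≤ s := by
  calc kurepa s
      ≤ ∫ t in Ioi 0, Real.exp (-t) * (s + s * (s - 1) / 2 * (t - 1)) :=
        setIntegral_mono_on (integrableOn_kurepaIntegrand (zero_le_one.trans hs1))
          (integrableOn_exp_neg_mul_affine _ _) measurableSet_Ioi fun t ht0 ↦
            mul_le_mul_of_nonneg_left (rpow_sub_one_div_sub_one_le hs1 hs2 ht0) (Real.exp_pos _).le
    _ = s := integral_exp_neg_mul_affine _ _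

lemma one_le_Gamma {y : ℝ} (hy : 2 ≤ y) : 1 ≤ Real.Gamma y :=
  Real.Gamma_two ▸ Real.Gamma_strictMonoOn_Ici.monotoneOn self_mem_Ici hy hy

lemma kurepa_add_one_le_Gamma_iff {y : ℝ} (hy : 0 ≤ y) :
    kurepa (y + 1) ≤ Real.Gamma (y + 1 + 1) ↔ kurepa y ≤ y * Real.Gamma (y + 1) := by
  rw [kurepa_add_one hy, Real.Gamma_add_one (s := y + 1) (by linarith), add_one_mul, add_comm,
    add_le_add_iff_right]

lemma kurepa_le_mul_Gamma_of_le_two {s : ℝ} (hs1 : 1 ≤ s) (hs2 : s ≤ 2) :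
    kurepa s ≤ s * Real.Gamma (s + 1) :=
  (kurepa_le_self hs1 hs2).trans
    (le_mul_of_one_le_right (by linarith) (one_le_Gamma (by linarith)))

lemma kurepa_le_mul_Gamma {y : ℝ} (hy : 1 ≤ y) : kurepa y ≤ y * Real.Gamma (y + 1) := by
  have h_shift (n : ℕ) {s : ℝ} (hs1 : 1 ≤ s) (hs2 : s ≤ 2) :
      kurepa (s + n) ≤ (s + n) * Real.Gamma (s + n + 1) := by
    induction n with
    | zero => simpa using kurepa_le_mul_Gamma_of_le_two hs1 hs2
    | succ n ih =>
      have h_one_le : 1 ≤ s + n := le_add_of_le_of_nonneg hs1 n.cast_nonneg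
      push_cast
      rw [← add_assoc]
      calc kurepa (s + n + 1)
          ≤ Real.Gamma (s + n + 1 + 1) :=
            (kurepa_add_one_le_Gamma_iff (zero_le_one.trans h_one_le)).mpr ih
        _ ≤ (s + n + 1) * Real.Gamma (s + n + 1 + 1) :=
            le_mul_of_one_le_left (Real.Gamma_nonneg_of_nonneg (by linarith)) (by linarith)
  have h_floor_le : (⌊y - 1⌋₊ : ℝ) ≤ y - 1 := Nat.floor_le (sub_nonneg.mpr hy)
  have h_lt_floor : y - 1 < ⌊y - 1⌋₊ + 1 := Nat.lt_floor_add_one (y - 1)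
  have := h_shift ⌊y - 1⌋₊ (s := y - ⌊y - 1⌋₊) (by linarith) (by linarith)
  rwa [sub_add_cancel] at this

lemma kurepa_le_Gamma_add_one {y : ℝ} (hy : 2 ≤ y) : kurepa y ≤ Real.Gamma (y + 1) := by
  simpa using (kurepa_add_one_le_Gamma_iff (y := y - 1) (by linarith)).mpr
    (kurepa_le_mul_Gamma (by linarith))

lemma prod_range_add_mul_Gamma {z : ℝ} (hz : 0 < z) (n : ℕ) :
    (∏ i ∈ Finset.range n, (z + i)) * Real.Gamma z = Real.Gamma (z + n) := by
  induction n with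
  | zero => simp
  | succ n ih =>
    push_cast
    rw [Finset.prod_range_succ, mul_right_comm, ih, ← add_assoc,
      Real.Gamma_add_one (by positivity), mul_comm]

lemma prod_range_one_div_sub {x : ℝ} {j : ℕ} (hx : j < x) :
    ∏ i ∈ Finset.range (j + 1), 1 / (x - i) = Real.Gamma (x - j) / Real.Gamma (x + 1) := by
  have h_reflect :
      ∏ i ∈ Finset.range (j + 1), (x - i) = ∏ i ∈ Finset.range (j + 1), (x - j + i) := by
    rw [← Finset.prod_range_reflect]
    refine Finset.prod_congr rfl fun i hi ↦ ?_
    rw [Nat.add_sub_cancel, Nat.cast_sub (Finset.mem_range_succ_iff.mp hi)]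
    ring
  have h_Gamma := prod_range_add_mul_Gamma (sub_pos.mpr hx) (j + 1)
  push_cast at h_Gamma
  rw [← h_reflect, show x - j + (j + 1) = x + 1 by ring] at h_Gamma
  have h_pos : 0 < Real.Gamma (x - j) := Real.Gamma_pos_of_pos (sub_pos.mpr hx)
  rw [Finset.prod_div_distrib, Finset.prod_const_one, ← h_Gamma, div_mul_cancel_right₀ h_pos.ne',
    one_div]

lemma kurepaR_eq_sum_Gamma_div {k : ℕ} {x : ℝ} (hx : k < x + 1) :
    kurepaR k x = (∑ j ∈ Finset.range k, Real.Gamma (x - j)) / Real.Gamma (x + 1) := by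
  rw [kurepaR, Finset.sum_div]
  refine Finset.sum_congr rfl fun j hj ↦ prod_range_one_div_sub ?_
  have : (j + 1 : ℝ) ≤ k := mod_cast Finset.mem_range.mp hj
  linarith

lemma kurepaP_eq_sum_Gamma_div {n : ℕ} {x : ℝ} (hx : n < x) :
    kurepaP n x = (∑ j ∈ Finset.range (n + 1), Real.Gamma (x - j)) / Real.Gamma (x - n) := by
  have h_pos : 0 < x - n := sub_pos.mpr hx
  rw [eq_div_iff (Real.Gamma_pos_of_pos h_pos).ne', kurepaP, add_mul, one_mul, Finset.sum_mul,
    add_comm, ← Finset.sum_range_reflect (fun j : ℕ ↦ Real.Gamma (x - j)), Finset.sum_range_succ']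
  congr 1
  refine Finset.sum_congr rfl fun j hj ↦ ?_
  rw [prod_range_add_mul_Gamma h_pos, Nat.add_sub_cancel,
    Nat.cast_sub (Finset.mem_range.mp hj), sub_sub_eq_add_sub, sub_add_eq_add_sub]

lemma kurepa_div_Gamma_eq {k : ℕ} {x : ℝ} (hx : k ≤ x) :
    kurepa x / Real.Gamma (x + 1) = kurepaR k x + kurepa (x - k) / Real.Gamma (x + 1) := by
  rw [kurepa_eq_sum_Gamma_add hx, kurepaR_eq_sum_Gamma_div (by linarith), add_div]

lemma kurepaP_add_one_div_mul_kurepaR {n : ℕ} {x : ℝ} (hx : n < x) :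
    (kurepaP n x + 1) / kurepaP n x * kurepaR (n + 1) x
      = kurepaR (n + 1) x + Real.Gamma (x - n) / Real.Gamma (x + 1) := by
  have h_Gamma_pos {j : ℕ} (hj : j ≤ n) : 0 < Real.Gamma (x - j) :=
    Real.Gamma_pos_of_pos (sub_pos.mpr (hx.trans_le' (mod_cast hj)))
  have h_sum_pos : 0 < ∑ j ∈ Finset.range (n + 1), Real.Gamma (x - j) :=
    Finset.sum_pos (fun j hj ↦ h_Gamma_pos (Finset.mem_range_succ_iff.mp hj)) (by simp)
  rw [kurepaR_eq_sum_Gamma_div (by push_cast; linarith), kurepaP_eq_sum_Gamma_div hx]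
  field_simp [(h_Gamma_pos le_rfl).ne']

lemma kurepaR_lt_kurepa_div_Gamma {k : ℕ} {x : ℝ} (hx : k < x) :
    kurepaR k x < kurepa x / Real.Gamma (x + 1) := by
  have h_Gamma_pos : 0 < Real.Gamma (x + 1) :=
    Real.Gamma_pos_of_pos (add_pos (k.cast_nonneg.trans_lt hx) one_pos)
  rw [kurepa_div_Gamma_eq hx.le]
  exact lt_add_of_pos_right _ (div_pos (kurepa_pos (sub_pos.mpr hx)) h_Gamma_pos)

/-- For `k ≥ 1` and `x ≥ k + 2`,
`R_k(x) < K(x)/Γ(x+1) ≤ ((P_{k-1}(x)+1)/P_{k-1}(x)) R_k(x)`,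
the right-hand inequality being an equality when `x = k + 2`. -/
theorem kurepa_div_Gamma_bounds (k : ℕ) (hk : 1 ≤ k) (x : ℝ)
    (hx : (k : ℝ) + 2 ≤ x) :
    kurepaR k x < kurepa x / Real.Gamma (x + 1) ∧
    kurepa x / Real.Gamma (x + 1)
      ≤ ((kurepaP (k - 1) x + 1) / kurepaP (k - 1) x) * kurepaR k x ∧
    (x = (k : ℝ) + 2 →
      kurepa x / Real.Gamma (x + 1)
        = ((kurepaP (k - 1) x + 1) / kurepaP (k - 1) x) * kurepaR k x) := by
  obtain ⟨n, rfl⟩ : ∃ n, k = n + 1 := ⟨k - 1, by lia⟩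
  rw [Nat.add_sub_cancel, kurepaP_add_one_div_mul_kurepaR (by push_cast at hx; linarith)]
  have h_Gamma_pos : 0 < Real.Gamma (x + 1) :=
    Real.Gamma_pos_of_pos (by linarith [(n + 1).cast_nonneg (α := ℝ)])
  have h_sub : x - n = x - (n + 1 : ℕ) + 1 := by push_cast; ring
  refine ⟨kurepaR_lt_kurepa_div_Gamma (by linarith), ?_, fun hx_eq ↦ ?_⟩
  · rw [kurepa_div_Gamma_eq (k := n + 1) (by linarith), h_sub]
    gcongr
    exact kurepa_le_Gamma_add_one (by linarith)
  · have h_two : x - (n + 1 : ℕ) = 2 := by linarith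
    have h_Gamma_three : Real.Gamma (2 + 1) = 2 := by
      rw [Real.Gamma_add_one two_ne_zero, Real.Gamma_two, mul_one]
    rw [kurepa_div_Gamma_eq (k := n + 1) (by linarith), h_sub, h_two, kurepa_two, h_Gamma_three]
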